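/- Let ζ be a primitive aperiodic binary substitution of constant length q ≥ 2 with ζ(0) starting with 0 and x = ζ^∞(0). Then for every integer ℓ ≥ 1 the limits P_ℓ(x,∞,ε₀) = lim_{n→∞} P_ℓ(x,n,ε₀) and P≥_ℓ(x,∞,ε₀) = lim_{n→∞} P≥_ℓ(x,n,ε₀) exist and satisfy P_ℓ(x,∞,ε₀) = dens(K_ℓ) and P≥_ℓ(x,∞,ε₀) = Σ_{l≥ℓ} dens(K_l) > 0; moreover dens(K_ℓ) > 0 for infinitely many ℓ. -/

import Mathlib

open Filter Topology MeasureTheory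

namespace RQA

/-- The standard metric on symbolic sequences over an alphabet `α`:
`ρ(x,y) = 2^{-min{i : x i ≠ y i}}` for `x ≠ y` and `ρ(x,x) = 0`. -/
noncomputable def seqDist {α : Type*} (x y : ℕ → α) : ℝ :=
  haveI := Classical.propDecidable (x = y)
  if x = y then 0 else (2 : ℝ) ^ (-((sInf {i : ℕ | x i ≠ y i} : ℕ) : ℤ))

/-- The (one-sided) shift on sequences. -/
def shift {α : Type*} (x : ℕ → α) : ℕ → α := fun i => x (i + 1)

/-- The embedded sequence `x^{(m)}`, a sequence over the alphabet `α^m`. -/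
def embedSeq {α : Type*} (m : ℕ) (x : ℕ → α) : ℕ → (Fin m → α) :=
  fun j t => x (j + (t : ℕ))

section RQAdefs

variable {X : Type*} (d : X → X → ℝ) (f : X → X) (x : X)

/-- The entry of the recurrence plot at `(i,j)` equals `1`. -/
def RPone (ε : ℝ) (i j : ℕ) : Prop := d (f^[i] x) (f^[j] x) ≤ ε

/-- `(i, j, l)` is a diagonal line in the recurrence plot `RP(x, n, ε)`. -/
def IsLine (n : ℕ) (ε : ℝ) (i j l : ℕ) : Prop :=
  1 ≤ l ∧ i + l ≤ n ∧ j + l ≤ n ∧ i ≠ j ∧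
  (∀ h, h < l → RPone d f x ε (i + h) (j + h)) ∧
  (0 < i → 0 < j → ¬ RPone d f x ε (i - 1) (j - 1)) ∧
  (max i j + l < n → ¬ RPone d f x ε (i + l) (j + l))

/-- `N_l(x, n, ε)`: the number of diagonal lines of length exactly `l`. -/
noncomputable def Nlines (n : ℕ) (ε : ℝ) (l : ℕ) : ℕ :=
  Set.ncard {p : ℕ × ℕ | IsLine d f x n ε p.1 p.2 l}

/-- `P_l(x, n, ε) = N_l/(n² − n)`. -/
noncomputable def Pline (n : ℕ) (ε : ℝ) (l : ℕ) : ℝ :=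
  (Nlines d f x n ε l : ℝ) / ((n : ℝ) ^ 2 - (n : ℝ))

/-- `P≥_ℓ(x, n, ε) = Σ_{l ≥ ℓ} P_l`. -/
noncomputable def PlineGe (n : ℕ) (ε : ℝ) (ℓ : ℕ) : ℝ :=
  ∑' k : ℕ, Pline d f x n ε (ℓ + k)

/-- The recurrence rate `RR_ℓ(x, n, ε) = Σ_{l ≥ ℓ} l · P_l`. -/
noncomputable def RRate (n : ℕ) (ε : ℝ) (ℓ : ℕ) : ℝ :=
  ∑' k : ℕ, ((ℓ + k : ℕ) : ℝ) * Pline d f x n ε (ℓ + k)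

/-- The determinism `DET_ℓ(x, n, ε) = RR_ℓ/RR_1`. -/
noncomputable def DETrm (n : ℕ) (ε : ℝ) (ℓ : ℕ) : ℝ :=
  RRate d f x n ε ℓ / RRate d f x n ε 1

/-- The average line length `L_ℓ(x, n, ε) = RR_ℓ/P≥_ℓ`. -/
noncomputable def LAvg (n : ℕ) (ε : ℝ) (ℓ : ℕ) : ℝ :=
  RRate d f x n ε ℓ / PlineGe d f x n ε ℓ

/-- The entropy of line lengths
`ENT_ℓ(x, n, ε) = log P≥_ℓ − (1/P≥_ℓ)·Σ_{l≥ℓ} P_l · log P_l` (with `0·log 0 = 0`). -/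
noncomputable def ENTln (n : ℕ) (ε : ℝ) (ℓ : ℕ) : ℝ :=
  Real.log (PlineGe d f x n ε ℓ) -
    (PlineGe d f x n ε ℓ)⁻¹ *
      ∑' k : ℕ, Pline d f x n ε (ℓ + k) * Real.log (Pline d f x n ε (ℓ + k))

/-- The correlation sum
`C_ℓ(x, n, ε) = n^{-2}·#{(i,j) ∈ [0,n)² : d_ℓ(f^i x, f^j x) ≤ ε}`,
where `d_ℓ` is the Bowen metric. -/
noncomputable def corrSum (ℓ n : ℕ) (ε : ℝ) : ℝ :=
  (Set.ncard {p : ℕ × ℕ | p.1 < n ∧ p.2 < n ∧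
      ∀ k, k < ℓ → d (f^[p.1 + k] x) (f^[p.2 + k] x) ≤ ε} : ℝ) / (n : ℝ) ^ 2

end RQAdefs

/-- The extension of a substitution to a morphism of the free monoid of finite words. -/
def substWord (ζ : Bool → List Bool) : List Bool → List Bool :=
  fun w => w.foldr (fun a r => ζ a ++ r) []

/-- `ζ` is a (binary) substitution of constant length `q ≥ 2`. -/
def IsConstLenSubst (ζ : Bool → List Bool) (q : ℕ) : Prop :=
  2 ≤ q ∧ ∀ a : Bool, (ζ a).length = q

/-- The language `L_ζ`: subwords of the words `ζ^k(a)`, `a ∈ A`, `k ≥ 1`. -/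
def substLang (ζ : Bool → List Bool) : Set (List Bool) :=
  {w | ∃ a : Bool, ∃ k : ℕ, 1 ≤ k ∧ w <:+: (substWord ζ)^[k] [a]}

/-- The substitution subshift `X_ζ`. -/
def SubstShift (ζ : Bool → List Bool) : Set (ℕ → Bool) :=
  {y | ∀ n : ℕ, (List.ofFn fun t : Fin n => y (t : ℕ)) ∈ substLang ζ}

/-- `ζ` is primitive. -/
def IsPrimitive (ζ : Bool → List Bool) : Prop :=
  ∃ k : ℕ, 1 ≤ k ∧ ∀ a b : Bool, b ∈ (substWord ζ)^[k] [a]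

/-- `ζ` is aperiodic: `X_ζ` contains a non-periodic sequence. -/
def IsAperiodic (ζ : Bool → List Bool) : Prop :=
  ∃ y ∈ SubstShift ζ, ∀ p : ℕ, 1 ≤ p → ∃ i : ℕ, y (i + p) ≠ y i

/-- The action of a constant length-`q` substitution on infinite sequences. -/
def substSeq (ζ : Bool → List Bool) (q : ℕ) (x : ℕ → Bool) : ℕ → Bool :=
  fun i => (ζ (x (i / q))).getD (i % q) false

/-- `(i, j, l)` is a line in the infinite symbolic recurrence plot `RP(x, ∞, ε₀)`. -/
def IsInfLine (x : ℕ → Bool) (i j l : ℕ) : Prop :=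
  1 ≤ l ∧ i ≠ j ∧ (∀ h, h < l → x (i + h) = x (j + h)) ∧
  (0 < i → 0 < j → x (i - 1) ≠ x (j - 1)) ∧ x (i + l) ≠ x (j + l)

/-- `K_l`: the set of starting points `(i,j)`, `i,j ≥ 1`, of inner lines of length `l`
in the infinite symbolic recurrence plot. -/
def Kset (x : ℕ → Bool) (l : ℕ) : Set (ℕ × ℕ) :=
  {p | 1 ≤ p.1 ∧ 1 ≤ p.2 ∧ IsInfLine x p.1 p.2 l}

/-- `#(M ∩ [0,n)²)/n²`. -/
noncomputable def densCount (M : Set (ℕ × ℕ)) (n : ℕ) : ℝ :=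
  (Set.ncard (M ∩ {p : ℕ × ℕ | p.1 < n ∧ p.2 < n}) : ℝ) / (n : ℝ) ^ 2

/-- `M ⊆ ℕ²` has asymptotic density `a`. -/
def HasDens (M : Set (ℕ × ℕ)) (a : ℝ) : Prop :=
  Tendsto (densCount M) atTop (𝓝 a)

/-- `δ_l(n) = #(K_l ∩ [1,n)²)/(n² − n)`. -/
noncomputable def deltaK (x : ℕ → Bool) (l n : ℕ) : ℝ :=
  (Set.ncard (Kset x l ∩ {p : ℕ × ℕ | p.1 < n ∧ p.2 < n}) : ℝ) / ((n : ℝ) ^ 2 - (n : ℝ))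

/-- `M` is a minimal subset of the subshift `Y`. -/
def IsMinimalSubset (Y M : Set (ℕ → Bool)) : Prop :=
  M ⊆ Y ∧ M.Nonempty ∧ IsClosed M ∧ (∀ z ∈ M, shift z ∈ M) ∧
  ∀ M' : Set (ℕ → Bool), M' ⊆ M → M'.Nonempty → IsClosed M' →
    (∀ z ∈ M', shift z ∈ M') → M' = M

end RQA

open RQA

/-!
A fixed point `x` of a primitive substitution of constant length `q` is made of blocks of length
`Q = q ^ k`, each determined by a single letter and each containing all letters. Any two blocks
share a letter, so passing from blocks to blocks of blocks contracts the oscillation of the relative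
number of occurrences of a word by `1 - 1 / Q`, up to boundary effects. Hence every word has a
frequency, and by block recurrence the frequency of an occurring word is positive.

A line of length at least `l` starts just after a pair of positions at which different letters are
followed by the same word of length `l`. Membership in this set of pairs depends only on the
words of length `l + 1` at the two positions, so it has a density `E l`. The lines being disjoint,
`E l ≤ 1 / l`; aperiodicity makes the set nonempty, whence `E l > 0`. Since `E` counts the lines of
length at least `l`, those of length exactly `l` have density `E l - E (l + 1)`, and summing over
`l ≥ ℓ` telescopes to `E ℓ`. The difference is positive infinitely often because `E` is positive and
tends to `0`.
-/

namespace RQA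

open Finset

/-! ### Cesàro means and block sums -/

section Mean

/-- The Cesàro mean of `φ` exists and equals `a`; for a `0`-`1` valued `φ` this is the frequency
of the positions marked by `φ`. -/
def HasMean (φ : ℕ → ℝ) (a : ℝ) : Prop :=
  Tendsto (fun n : ℕ => (∑ i ∈ range n, φ i) / n) atTop (𝓝 a)

/-- The sum of `φ` over the `s`-th block `[L s, L s + L)` of length `L`. -/
def blockSum (φ : ℕ → ℝ) (L s : ℕ) : ℝ := ∑ r ∈ range L, φ (L * s + r)

variable {φ : ℕ → ℝ} {L : ℕ}

lemma sum_range_mul_eq_sum_blockSum (φ : ℕ → ℝ) (L n : ℕ) :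
    ∑ i ∈ range (L * n), φ i = ∑ s ∈ range n, blockSum φ L s := by
  induction n with
  | zero => simp
  | succ n ih => rw [Nat.mul_succ, sum_range_add, ih, sum_range_succ, blockSum]

lemma blockSum_mul (φ : ℕ → ℝ) (L Q s : ℕ) :
    blockSum φ (L * Q) s = blockSum (blockSum φ L) Q s := by
  rw [blockSum, sum_range_mul_eq_sum_blockSum (fun i => φ (L * Q * s + i))]
  simp only [blockSum, mul_add, mul_assoc, add_assoc]

lemma abs_sum_range_le {C : ℝ} (hφ : ∀ i, |φ i| ≤ C) (m k : ℕ) :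
    |∑ r ∈ range k, φ (m + r)| ≤ k * C :=
  (abs_sum_le_sum_abs _ _).trans <|
    (sum_le_card_nsmul _ _ C fun _ _ => hφ _).trans_eq (by simp)

lemma abs_sum_range_sub_le {C D : ℝ} (hφ : ∀ i, |φ i| ≤ C) (hL : 0 < L)
    (hD : ∀ s t, |blockSum φ L s - blockSum φ L t| ≤ D) (n : ℕ) :
    |∑ i ∈ range n, φ i - blockSum φ L 0 / L * n| ≤ D / L * n + 2 * C * L := by
  have hL' : (0 : ℝ) < L := by exact_mod_cast hL
  have hC : 0 ≤ C := (abs_nonneg _).trans (hφ 0)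
  have hD0 : 0 ≤ D := (abs_nonneg _).trans (hD 0 0)
  have hmod : ((n % L : ℕ) : ℝ) ≤ L := by exact_mod_cast (Nat.mod_lt n hL).le
  have hn : (n : ℝ) = L * (n / L : ℕ) + (n % L : ℕ) := by exact_mod_cast (Nat.div_add_mod n L).symm
  have hsplit : ∑ i ∈ range n, φ i =
      ∑ s ∈ range (n / L), blockSum φ L s + ∑ r ∈ range (n % L), φ (L * (n / L) + r) := by
    rw [← sum_range_mul_eq_sum_blockSum, ← sum_range_add, Nat.div_add_mod]
  have hblocks : |∑ s ∈ range (n / L), (blockSum φ L s - blockSum φ L 0)| ≤ (n / L : ℕ) * D :=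
    (abs_sum_le_sum_abs _ _).trans <|
      (sum_le_card_nsmul _ _ D fun _ _ => hD _ _).trans_eq (by simp)
  have htail : |∑ r ∈ range (n % L), φ (L * (n / L) + r)| ≤ L * C :=
    (abs_sum_range_le hφ _ _).trans (by gcongr)
  have hfirst : |blockSum φ L 0 / L * (n % L : ℕ)| ≤ L * C := by
    have hmean : |blockSum φ L 0 / L| ≤ C := by
      rw [abs_div, abs_of_pos hL', div_le_iff₀ hL', mul_comm]
      exact abs_sum_range_le hφ _ _
    rw [abs_mul, Nat.abs_cast, mul_comm]
    gcongr
  have hdecomp : ∑ i ∈ range n, φ i - blockSum φ L 0 / L * n =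
      ∑ s ∈ range (n / L), (blockSum φ L s - blockSum φ L 0)
        + ∑ r ∈ range (n % L), φ (L * (n / L) + r)
        + -(blockSum φ L 0 / L * (n % L : ℕ)) := by
    rw [hsplit, sum_sub_distrib, sum_const, card_range, nsmul_eq_mul, hn]
    field_simp
    ring
  have hbulk : (n / L : ℕ) * D ≤ D / L * n := by
    rw [hn, mul_add, ← mul_assoc, div_mul_cancel₀ _ hL'.ne', mul_comm]
    exact le_add_of_nonneg_right (by positivity)
  rw [hdecomp]
  refine (abs_add_three _ _ _).trans ?_
  rw [abs_neg]
  linarith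

lemma cauchySeq_of_forall_eventually_dist_le {X : Type*} [PseudoMetricSpace X] {u : ℕ → X}
    (h : ∀ ε > 0, ∃ a, ∀ᶠ n in atTop, dist (u n) a ≤ ε) : CauchySeq u := by
  refine Metric.cauchySeq_iff'.2 fun ε hε => ?_
  obtain ⟨a, ha⟩ := h (ε / 3) (by positivity)
  obtain ⟨N, hN⟩ := eventually_atTop.1 ha
  refine ⟨N, fun n hn => (dist_triangle_right _ _ a).trans_lt ?_⟩
  linarith [hN n hn, hN N le_rfl]

lemma exists_hasMean_of_blockSum_oscillation {C : ℝ} (hφ : ∀ i, |φ i| ≤ C)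
    (hosc : ∀ ε > 0, ∃ L > 0, ∀ s t, |blockSum φ L s - blockSum φ L t| ≤ ε * L) :
    ∃ a, HasMean φ a := by
  refine cauchySeq_tendsto_of_complete (cauchySeq_of_forall_eventually_dist_le fun ε hε => ?_)
  obtain ⟨L, hL, hLosc⟩ := hosc (ε / 2) (by positivity)
  have hsmall : ∀ᶠ n : ℕ in atTop, 2 * C * L / n < ε / 2 :=
    (tendsto_const_div_atTop_nhds_zero_nat _).eventually_lt_const (by positivity)
  refine ⟨blockSum φ L 0 / L, ?_⟩
  filter_upwards [hsmall, eventually_gt_atTop 0] with n hn hn0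
  have hn0' : (0 : ℝ) < n := by exact_mod_cast hn0
  have hL' : (L : ℝ) ≠ 0 := by exact_mod_cast hL.ne'
  rw [div_lt_iff₀ hn0'] at hn
  rw [Real.dist_eq, div_sub' hn0'.ne', abs_div, abs_of_pos hn0', div_le_iff₀ hn0', mul_comm (n : ℝ)]
  calc _ ≤ ε / 2 * L / L * n + 2 * C * L := abs_sum_range_sub_le hφ hL hLosc n
    _ ≤ ε * n := by rw [mul_div_cancel_right₀ _ hL']; linarith

lemma HasMean.div_le_of_forall_le_blockSum {a c : ℝ} (h : HasMean φ a) (hL : 0 < L)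
    (hc : ∀ s, c ≤ blockSum φ L s) : c / L ≤ a := by
  have hL' : (0 : ℝ) < L := by exact_mod_cast hL
  refine ge_of_tendsto (h.comp (tendsto_id.const_mul_atTop' hL)) ?_
  filter_upwards [eventually_gt_atTop 0] with n hn
  have hn' : (0 : ℝ) < n := by exact_mod_cast hn
  simp only [Function.comp_apply, id_eq, sum_range_mul_eq_sum_blockSum, Nat.cast_mul]
  rw [div_le_div_iff₀ hL' (mul_pos hL' hn')]
  have hsum : n * c ≤ ∑ s ∈ range n, blockSum φ L s := by
    simpa using card_nsmul_le_sum (range n) _ c fun s _ => hc s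
  nlinarith

lemma HasMean.nonneg {a : ℝ} (h : HasMean φ a) (hφ : ∀ i, 0 ≤ φ i) : 0 ≤ a :=
  ge_of_tendsto' h fun n => div_nonneg (sum_nonneg fun i _ => hφ i) n.cast_nonneg

end Mean

/-! ### Word frequencies in self-similar sequences -/

section Frequency

variable {α : Type*} {x : ℕ → α} {Q : ℕ}

/-- The `s`-th block of length `q` of `x` depends only on the letter `x s`, as for a fixed point of
a substitution of constant length `q`. -/
def BlockDetermined (x : ℕ → α) (q : ℕ) : Prop :=
  ∀ s t, x s = x t → ∀ r < q, x (q * s + r) = x (q * t + r)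

/-- Every block of length `q` of `x` contains all letters of `x`, as for a fixed point of a
substitution of constant length `q` with positive incidence matrix. -/
def BlockRecurrent (x : ℕ → α) (q : ℕ) : Prop :=
  ∀ i s, ∃ r < q, x (q * s + r) = x i

lemma BlockDetermined.pow (h : BlockDetermined x Q) (k : ℕ) : BlockDetermined x (Q ^ k) := by
  induction k with
  | zero => intro s t hst r hr; simpa [Nat.lt_one_iff.1 ((pow_zero Q) ▸ hr)] using hst
  | succ k ih =>
    intro s t hst r hr
    rw [pow_succ] at hr ⊢
    have hQ : 0 < Q := Nat.pos_of_mul_pos_left (Nat.zero_lt_of_lt hr)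
    have hsplit : ∀ u, Q ^ k * Q * u + r = Q * (Q ^ k * u + r / Q) + r % Q := fun u => by
      conv_lhs => rw [← Nat.div_add_mod r Q]
      ring
    rw [hsplit, hsplit]
    exact h _ _ (ih s t hst _ (Nat.div_lt_of_lt_mul (by rwa [mul_comm]))) _ (Nat.mod_lt _ hQ)

lemma BlockDetermined.embedSeq_eq (h : BlockDetermined x Q) {s t r m : ℕ} (hst : x s = x t)
    (hr : r + m ≤ Q) : embedSeq m x (Q * s + r) = embedSeq m x (Q * t + r) := by
  funext i
  simp only [embedSeq, add_assoc]
  exact h s t hst (r + i) (by omega)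

lemma exists_forall_block_embedSeq_eq (hdet : BlockDetermined x Q) (hrec : BlockRecurrent x Q)
    (hQ : 1 < Q) (m i : ℕ) : ∃ L > 0, ∀ s, ∃ r < L, embedSeq m x (L * s + r) = embedSeq m x i := by
  obtain ⟨k, hk⟩ : ∃ k, i + m < Q ^ k := ⟨i + m, Nat.lt_pow_self hQ⟩
  refine ⟨Q ^ k * Q, by positivity, fun s => ?_⟩
  obtain ⟨r, hr, hx⟩ := hrec 0 s
  refine ⟨Q ^ k * r + i, ?_, ?_⟩
  · calc Q ^ k * r + i < Q ^ k * (r + 1) := by rw [mul_add_one]; omega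
      _ ≤ Q ^ k * Q := Nat.mul_le_mul_left _ hr
  · have := (hdet.pow k).embedSeq_eq hx hk.le
    rwa [mul_zero, zero_add, mul_add, add_assoc, ← mul_assoc] at this

lemma abs_blockSum_sub_le_of_apply_eq (hdet : BlockDetermined x Q) {b : ℕ → ℝ} {δ : ℝ}
    (hδ : ∀ s t, x s = x t → |b s - b t| ≤ δ) {s t : ℕ} (hst : x s = x t) :
    |blockSum b Q s - blockSum b Q t| ≤ Q * δ := by
  rw [blockSum, blockSum, ← sum_sub_distrib]
  refine (abs_sum_le_sum_abs _ _).trans ?_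
  refine (sum_le_card_nsmul _ _ δ fun r hr => ?_).trans_eq (by simp)
  exact hδ _ _ (hdet s t hst r (mem_range.1 hr))

-- Two blocks share a letter; matching one occurrence of it in each costs `δ` instead of `Δ`.
lemma abs_blockSum_sub_le (hrec : BlockRecurrent x Q) {b : ℕ → ℝ} {δ Δ : ℝ}
    (hδ : ∀ s t, x s = x t → |b s - b t| ≤ δ) (hΔ : ∀ s t, |b s - b t| ≤ Δ) (s t : ℕ) :
    |blockSum b Q s - blockSum b Q t| ≤ (Q - 1) * Δ + δ := by
  obtain ⟨u, hu, hxu⟩ := hrec 0 s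
  obtain ⟨v, hv, hxv⟩ := hrec 0 t
  have hswap : blockSum b Q t = ∑ r ∈ range Q, b (Q * t + Equiv.swap u v r) :=
    (sum_equiv (Equiv.swap u v) (fun r => by
      simp only [mem_range, Equiv.swap_apply_def]; split_ifs <;> omega) fun _ _ => rfl).symm
  rw [hswap, blockSum, ← sum_sub_distrib, ← sum_erase_add _ _ (mem_range.2 hu)]
  refine (abs_add_le _ _).trans (add_le_add ?_ ?_)
  · refine (abs_sum_le_sum_abs _ _).trans ((sum_le_card_nsmul _ _ Δ fun r _ => hΔ _ _).trans_eq ?_)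
    rw [card_erase_of_mem (mem_range.2 hu), card_range, nsmul_eq_mul,
      Nat.cast_sub (Nat.one_le_of_lt hu), Nat.cast_one]
  · rw [Equiv.swap_apply_left]
    exact hδ _ _ (hxu.trans hxv.symm)

variable [DecidableEq α] {m : ℕ}

/-- The indicator of the occurrences of the word `w` in `x`. -/
def occ (x : ℕ → α) (w : Fin m → α) (i : ℕ) : ℝ := if embedSeq m x i = w then 1 else 0

lemma occ_nonneg (x : ℕ → α) (w : Fin m → α) (i : ℕ) : 0 ≤ occ x w i := by
  unfold occ; split_ifs <;> simp

lemma occ_le_one (x : ℕ → α) (w : Fin m → α) (i : ℕ) : occ x w i ≤ 1 := by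
  unfold occ; split_ifs <;> simp

lemma abs_occ_sub_le_one (x : ℕ → α) (w : Fin m → α) (i j : ℕ) : |occ x w i - occ x w j| ≤ 1 :=
  abs_sub_le_of_nonneg_of_le (occ_nonneg x w i) (occ_le_one x w i) (occ_nonneg x w j)
    (occ_le_one x w j)

lemma abs_blockSum_occ_sub_le (x : ℕ → α) (w : Fin m → α) (L s t : ℕ) :
    |blockSum (occ x w) L s - blockSum (occ x w) L t| ≤ L := by
  rw [blockSum, blockSum, ← sum_sub_distrib]
  refine (abs_sum_le_sum_abs _ _).trans ?_
  exact (sum_le_card_nsmul _ _ 1 fun r _ => abs_occ_sub_le_one x w _ _).trans_eq (by simp)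

-- Only the occurrences that overlap the next block, fewer than `m`, are not determined by `x s`.
lemma BlockDetermined.abs_blockSum_occ_sub_le (hdet : BlockDetermined x Q) (w : Fin m → α)
    {s t : ℕ} (hst : x s = x t) :
    |blockSum (occ x w) Q s - blockSum (occ x w) Q t| ≤ m := by
  have hinner : ∀ r ∈ range Q, ¬ Q - m ≤ r →
      |occ x w (Q * s + r) - occ x w (Q * t + r)| = 0 := fun r _ hrm => by
    rw [occ, occ, hdet.embedSeq_eq hst (by omega), sub_self, abs_zero]
  have hsub : (range Q).filter (Q - m ≤ ·) ⊆ Ico (Q - m) Q := fun r hr => by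
    simpa [and_comm] using hr
  rw [blockSum, blockSum, ← sum_sub_distrib]
  refine (abs_sum_le_sum_abs _ _).trans ?_
  rw [← sum_filter_of_ne fun r hr hne => not_not.1 fun h => hne (hinner r hr h)]
  refine (sum_le_card_nsmul _ _ 1 fun r _ => abs_occ_sub_le_one x w _ _).trans ?_
  rw [nsmul_one]
  exact_mod_cast (card_le_card hsub).trans (by rw [Nat.card_Ico]; omega)

-- The relative oscillation is the fixed-point iteration `ρ ↦ (1 - 1/Q) ρ + ε/Q` started at `1 + ε`,
-- where `ε = m / Q ^ k` bounds the overlap effects.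
lemma abs_blockSum_occ_pow_sub_le (hdet : BlockDetermined x Q) (hrec : BlockRecurrent x Q)
    (hQ : 0 < Q) (w : Fin m → α) (k j : ℕ) :
    (∀ s t, x s = x t → |blockSum (occ x w) (Q ^ k * Q ^ j) s
      - blockSum (occ x w) (Q ^ k * Q ^ j) t| ≤ m * Q ^ j) ∧
    ∀ s t, |blockSum (occ x w) (Q ^ k * Q ^ j) s - blockSum (occ x w) (Q ^ k * Q ^ j) t|
      ≤ ((1 - 1 / Q) ^ j + m / Q ^ k) * (Q ^ k * Q ^ j) := by
  have : (Q : ℝ) ≠ 0 := by exact_mod_cast hQ.ne'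
  induction j with
  | zero =>
    simp only [pow_zero, mul_one]
    refine ⟨fun s t => (hdet.pow k).abs_blockSum_occ_sub_le w, fun s t => ?_⟩
    refine (RQA.abs_blockSum_occ_sub_le x w _ s t).trans ?_
    rw [Nat.cast_pow, add_mul, one_mul]
    exact le_add_of_nonneg_right (by positivity)
  | succ j ih =>
    simp only [pow_succ _ j, ← mul_assoc, blockSum_mul _ (Q ^ k * Q ^ j)]
    refine ⟨fun s t hst => ?_, fun s t => ?_⟩
    · exact (abs_blockSum_sub_le_of_apply_eq hdet ih.1 hst).trans_eq (by ring)
    · refine (abs_blockSum_sub_le hrec ih.1 ih.2 s t).trans_eq ?_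
      field_simp
      ring

theorem exists_hasMean_occ (hdet : BlockDetermined x Q) (hrec : BlockRecurrent x Q) (hQ : 1 < Q)
    (w : Fin m → α) : ∃ c, HasMean (occ x w) c := by
  have hQ' : (1 : ℝ) < Q := by exact_mod_cast hQ
  have hφ : ∀ i, |occ x w i| ≤ 1 := fun i => by
    rw [abs_of_nonneg (occ_nonneg x w i)]; exact occ_le_one x w i
  refine exists_hasMean_of_blockSum_oscillation hφ fun ε hε => ?_
  have hratio : 1 - 1 / (Q : ℝ) < 1 := by linarith [one_div_pos.2 (zero_lt_one.trans hQ')]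
  obtain ⟨j, hj⟩ := exists_pow_lt_of_lt_one (half_pos hε) hratio
  obtain ⟨k, hk⟩ := pow_unbounded_of_one_lt (m / (ε / 2)) hQ'
  refine ⟨Q ^ k * Q ^ j, by positivity, fun s t => ?_⟩
  refine ((abs_blockSum_occ_pow_sub_le hdet hrec (by omega) w k j).2 s t).trans ?_
  have hoverlap : m / (Q : ℝ) ^ k ≤ ε / 2 := by
    rw [div_lt_iff₀ (half_pos hε), mul_comm] at hk
    exact (div_lt_iff₀ (by positivity)).2 hk |>.le
  push_cast
  gcongr
  linarith

theorem HasMean.pos_of_occ_embedSeq (hdet : BlockDetermined x Q) (hrec : BlockRecurrent x Q)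
    (hQ : 1 < Q) {i : ℕ} {c : ℝ} (hc : HasMean (occ x (embedSeq m x i)) c) : 0 < c := by
  obtain ⟨L, hL, hocc⟩ := exists_forall_block_embedSeq_eq hdet hrec hQ m i
  have hblock : ∀ s, 1 ≤ blockSum (occ x (embedSeq m x i)) L s := fun s => by
    obtain ⟨r, hr, hw⟩ := hocc s
    calc (1 : ℝ) = occ x (embedSeq m x i) (L * s + r) := (if_pos hw).symm
      _ ≤ _ := single_le_sum (fun r _ => occ_nonneg x _ (L * s + r)) (mem_range.2 hr)
  exact lt_of_lt_of_le (by positivity) (hc.div_le_of_forall_le_blockSum hL hblock)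

end Frequency

/-! ### Densities of sets of pairs -/

section Density

/-- The number of points of `M` in the square `[0, n)²`. -/
noncomputable def countSq (M : Set (ℕ × ℕ)) (n : ℕ) : ℕ :=
  (M ∩ {p : ℕ × ℕ | p.1 < n ∧ p.2 < n}).ncard

variable {M M' : Set (ℕ × ℕ)} {a b : ℝ}

lemma densCount_eq_countSq_div (M : Set (ℕ × ℕ)) (n : ℕ) :
    densCount M n = countSq M n / (n : ℝ) ^ 2 := rfl

lemma finite_inter_square (M : Set (ℕ × ℕ)) (n : ℕ) :
    (M ∩ {p : ℕ × ℕ | p.1 < n ∧ p.2 < n}).Finite :=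
  (((Set.finite_Iio n).prod (Set.finite_Iio n)).subset fun _ hp => hp).inter_of_right M

open Classical in
lemma countSq_eq_card (M : Set (ℕ × ℕ)) (n : ℕ) :
    countSq M n = #{p ∈ range n ×ˢ range n | p ∈ M} := by
  rw [countSq, ← Set.ncard_coe_finset]
  congr 1
  ext p
  simp [and_comm]

lemma countSq_mono (h : M' ⊆ M) (n : ℕ) : countSq M' n ≤ countSq M n :=
  Set.ncard_le_ncard (Set.inter_subset_inter_left _ h) (finite_inter_square M n)

lemma countSq_sdiff (h : M' ⊆ M) (n : ℕ) :
    (countSq (M \ M') n : ℝ) = countSq M n - countSq M' n := by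
  rw [countSq, Set.inter_sdiff_distrib_right, eq_sub_iff_add_eq]
  exact_mod_cast Set.ncard_sdiff_add_ncard_of_subset (Set.inter_subset_inter_left _ h)
    (finite_inter_square M n)

lemma HasDens.sdiff (hM : HasDens M a) (hM' : HasDens M' b) (h : M' ⊆ M) :
    HasDens (M \ M') (a - b) := by
  refine (Tendsto.sub hM hM').congr fun n => ?_
  simp only [densCount_eq_countSq_div, countSq_sdiff h, sub_div]

lemma HasDens.le_of_subset (hM : HasDens M a) (hM' : HasDens M' b) (h : M' ⊆ M) : b ≤ a :=
  le_of_tendsto_of_tendsto' hM' hM fun n => by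
    simp only [densCount_eq_countSq_div]
    gcongr
    exact countSq_mono h n

lemma HasDens.tendsto_countSq_comp_div (hM : HasDens M a) {f : ℕ → ℕ} {d : ℕ → ℝ}
    (hf : Tendsto f atTop atTop) (hd : Tendsto (fun n => (f n : ℝ) ^ 2 / d n) atTop (𝓝 1)) :
    Tendsto (fun n => countSq M (f n) / d n) atTop (𝓝 a) := by
  rw [← mul_one a]
  refine ((Tendsto.comp hM hf).mul hd).congr' ?_
  filter_upwards [hf.eventually_gt_atTop 0] with n hn
  have hn' : (f n : ℝ) ^ 2 ≠ 0 := by positivity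
  rw [Function.comp_apply, densCount_eq_countSq_div, div_mul_div_cancel₀ hn']

lemma countSq_shift_le (M : Set (ℕ × ℕ)) (n : ℕ) :
    countSq {p | (p.1 + 1, p.2 + 1) ∈ M} (n - 1) ≤ countSq M n := by
  refine Set.ncard_le_ncard_of_injOn (fun p => (p.1 + 1, p.2 + 1)) ?_ ?_ (finite_inter_square M n)
  · rintro ⟨i, j⟩ ⟨hp, hi, hj⟩
    exact ⟨hp, Nat.add_lt_of_lt_sub hi, Nat.add_lt_of_lt_sub hj⟩
  · rintro ⟨i, j⟩ _ ⟨i', j'⟩ _ h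
    simpa using h

lemma countSq_le_countSq_shift_add (M : Set (ℕ × ℕ)) (n : ℕ) :
    countSq M n ≤ countSq {p | (p.1 + 1, p.2 + 1) ∈ M} (n - 1) + 2 * n := by
  classical
  set inner := {p ∈ range (n - 1) ×ˢ range (n - 1) | p ∈ {p | (p.1 + 1, p.2 + 1) ∈ M}}
  have hcover : {p ∈ range n ×ˢ range n | p ∈ M} ⊆
      inner.image (fun p => (p.1 + 1, p.2 + 1)) ∪ (range n ×ˢ {0} ∪ {0} ×ˢ range n) := by
    rintro ⟨_ | i, _ | j⟩ hp <;>
      simp only [inner, mem_union, mem_image, mem_product, mem_filter, mem_range, mem_singleton,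
        Set.mem_ofPred_eq, Prod.exists, Prod.mk.injEq] at hp ⊢ <;> grind
  have haxes : #(range n ×ˢ {0} ∪ {0} ×ˢ range n : Finset (ℕ × ℕ)) ≤ 2 * n :=
    (card_union_le _ _).trans_eq (by simp [two_mul])
  rw [countSq_eq_card, countSq_eq_card]
  exact (card_le_card hcover).trans <| (card_union_le _ _).trans <|
    add_le_add card_image_le haxes

lemma tendsto_natCast_sub_div (k : ℕ) :
    Tendsto (fun n : ℕ => ((n - k : ℕ) : ℝ) / n) atTop (𝓝 1) := by
  rw [← tendsto_add_atTop_iff_nat k]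
  simpa using tendsto_natCast_div_add_atTop (k : ℝ)

lemma HasDens.of_shift (h : HasDens {p | (p.1 + 1, p.2 + 1) ∈ M} a) : HasDens M a := by
  have hlow : Tendsto (fun n : ℕ =>
      countSq {p | (p.1 + 1, p.2 + 1) ∈ M} (n - 1) / (n : ℝ) ^ 2) atTop (𝓝 a) :=
    h.tendsto_countSq_comp_div (tendsto_sub_atTop_nat 1) <| by
      simpa [div_pow] using (tendsto_natCast_sub_div 1).pow 2
  have hupp := hlow.add (tendsto_const_div_atTop_nhds_zero_nat (2 : ℝ))
  rw [add_zero] at hupp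
  refine tendsto_of_tendsto_of_tendsto_of_le_of_le hlow hupp (fun n => ?_) fun n => ?_ <;>
    simp only [densCount_eq_countSq_div]
  · gcongr
    exact countSq_shift_le M n
  · have haxes : (2 : ℝ) / n = 2 * n / (n : ℝ) ^ 2 := by
      rcases eq_or_ne (n : ℝ) 0 with hn | hn
      · simp [hn]
      · field_simp
    rw [haxes, ← add_div]
    gcongr
    exact_mod_cast countSq_le_countSq_shift_add M n

open Classical in
lemma countSq_setOf_rel {β : Type*} [Fintype β] [DecidableEq β] (c : ℕ → β)
    (R : β → β → Prop) (n : ℕ) :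
    (countSq {p | R (c p.1) (c p.2)} n : ℝ) = ∑ u : β × β with R u.1 u.2,
      (∑ i ∈ range n, if c i = u.1 then (1 : ℝ) else 0) *
        ∑ j ∈ range n, if c j = u.2 then (1 : ℝ) else 0 := by
  have hmaps : ∀ p ∈ ({p ∈ range n ×ˢ range n | p ∈ {p | R (c p.1) (c p.2)}} : Finset (ℕ × ℕ)),
      (c p.1, c p.2) ∈ ({u : β × β | R u.1 u.2} : Finset (β × β)) := fun p hp => by
    simpa using (mem_filter.1 hp).2
  rw [countSq_eq_card, card_eq_sum_card_fiberwise hmaps, Nat.cast_sum]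
  refine sum_congr rfl fun u hu => ?_
  rw [sum_boole, sum_boole, ← Nat.cast_mul, ← card_product]
  congr 2
  ext p
  simp only [mem_filter, mem_product, mem_range, Prod.ext_iff]
  grind

open Classical in
theorem hasDens_setOf_rel {β : Type*} [Fintype β] [DecidableEq β] {c : ℕ → β} {f : β → ℝ}
    (hf : ∀ b, HasMean (fun i => if c i = b then 1 else 0) (f b)) (R : β → β → Prop) :
    HasDens {p | R (c p.1) (c p.2)} (∑ u : β × β with R u.1 u.2, f u.1 * f u.2) := by
  refine (tendsto_finsetSum _ fun u _ => (hf u.1).mul (hf u.2)).congr fun n => ?_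
  rw [densCount_eq_countSq_div, countSq_setOf_rel, sum_div]
  exact sum_congr rfl fun u _ => by rw [div_mul_div_comm, sq]

end Density

/-! ### Lines in symbolic recurrence plots -/

section Telescoping

variable {E : ℕ → ℝ}

lemma hasSum_sub_succ (hanti : Antitone E) (hE : Tendsto E atTop (𝓝 0)) (l : ℕ) :
    HasSum (fun k => E (l + k) - E (l + k + 1)) (E l) := by
  rw [hasSum_iff_tendsto_nat_of_nonneg fun k => sub_nonneg.2 (hanti (Nat.le_succ _))]
  have htail : Tendsto (fun n => E (l + n)) atTop (𝓝 0) :=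
    hE.comp (tendsto_atTop_mono (fun n => Nat.le_add_left n l) tendsto_id)
  have hpartial : ∀ n, ∑ k ∈ range n, (E (l + k) - E (l + k + 1)) = E l - E (l + n) :=
    sum_range_sub' fun k => E (l + k)
  simpa only [hpartial, sub_zero] using htail.const_sub (E l)

lemma infinite_setOf_lt_of_tendsto_zero (hpos : ∀ l, 0 < E l) (hE : Tendsto E atTop (𝓝 0)) :
    {l | E (l + 1) < E l}.Infinite := by
  refine Nat.frequently_atTop_iff_infinite.1 fun hmono => ?_
  obtain ⟨N, hN⟩ := eventually_atTop.1 hmono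
  have hge : ∀ l ≥ N, E N ≤ E l := fun l hl => by
    induction l, hl using Nat.le_induction with
    | base => exact le_rfl
    | succ l hl ih => exact ih.trans (not_lt.1 (hN l hl))
  exact (hpos N).not_ge (ge_of_tendsto hE (eventually_atTop.2 ⟨N, hge⟩))

end Telescoping

section Lines

variable {α : Type*} {x : ℕ → α} {l : ℕ}

lemma shift_iterate_apply (x : ℕ → α) (i j : ℕ) : (shift^[i] x) j = x (i + j) := by
  induction i generalizing j with
  | zero => simp
  | succ i ih => rw [Function.iterate_succ_apply', shift, ih]; congr 1; ring

lemma seqDist_le_half_iff (u v : ℕ → α) : seqDist u v ≤ 1 / 2 ↔ u 0 = v 0 := by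
  rcases eq_or_ne u v with rfl | hne
  · simp [seqDist]
  have hdiff : {i | u i ≠ v i}.Nonempty := Function.ne_iff.1 hne
  have hsInf : sInf {i | u i ≠ v i} = 0 ↔ u 0 ≠ v 0 := by
    rw [Nat.sInf_eq_zero, or_iff_left hdiff.ne_empty, Set.mem_ofPred_eq]
  have hhalf : (1 / 2 : ℝ) = 2 ^ (-1 : ℤ) := by norm_num
  rw [seqDist, if_neg hne, hhalf, zpow_le_zpow_iff_right₀ one_lt_two, ← not_iff_not, ← ne_eq (u 0),
    ← hsInf]
  omega

lemma RPone_half_iff (x : ℕ → α) (i j : ℕ) :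
    RPone seqDist shift x (1 / 2) i j ↔ x i = x j := by
  simp only [RPone, seqDist_le_half_iff, shift_iterate_apply, add_zero]

/-- The starting points of the lines of length at least `l` in the infinite recurrence plot,
including those on the axes, whose line need not be maximal to the left. -/
def lineStarts (x : ℕ → α) (l : ℕ) : Set (ℕ × ℕ) :=
  {p | p.1 ≠ p.2 ∧ (∀ h < l, x (p.1 + h) = x (p.2 + h)) ∧
    (0 < p.1 → 0 < p.2 → x (p.1 - 1) ≠ x (p.2 - 1))}

/-- The pairs of positions at which two different letters are followed by the same word of
length `l`. These are the points of `lineStarts x l` off the axes, shifted by `(-1, -1)`. -/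
def leftSpecialPairs (x : ℕ → α) (l : ℕ) : Set (ℕ × ℕ) :=
  {p | x p.1 ≠ x p.2 ∧ ∀ h < l, x (p.1 + 1 + h) = x (p.2 + 1 + h)}

lemma lineStarts_antitone (x : ℕ → α) : Antitone (lineStarts x) :=
  fun _ _ hl _ hp => ⟨hp.1, fun h hh => hp.2.1 h (hh.trans_le hl), hp.2.2⟩

lemma leftSpecialPairs_antitone (x : ℕ → α) : Antitone (leftSpecialPairs x) :=
  fun _ _ hl _ hp => ⟨hp.1, fun h hh => hp.2 h (hh.trans_le hl)⟩

lemma setOf_succ_mem_lineStarts (x : ℕ → α) (l : ℕ) :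
    {p : ℕ × ℕ | (p.1 + 1, p.2 + 1) ∈ lineStarts x l} = leftSpecialPairs x l := by
  ext p
  have hne : x p.1 ≠ x p.2 → p.1 ≠ p.2 := mt (congrArg x)
  simp only [lineStarts, leftSpecialPairs, Set.mem_ofPred_eq, add_tsub_cancel_right, ne_eq,
    add_left_inj, Nat.succ_pos, true_imp_iff]
  tauto

lemma setOf_succ_mem_Kset (x : ℕ → Bool) (hl : 1 ≤ l) :
    {p : ℕ × ℕ | (p.1 + 1, p.2 + 1) ∈ Kset x l} =
      leftSpecialPairs x l \ leftSpecialPairs x (l + 1) := by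
  ext p
  have hne : x p.1 ≠ x p.2 → p.1 ≠ p.2 := mt (congrArg x)
  simp only [Kset, IsInfLine, leftSpecialPairs, Set.mem_sdiff, Set.mem_ofPred_eq,
    Nat.forall_lt_succ_right, hl, add_tsub_cancel_right, ne_eq, add_left_inj, Nat.succ_pos,
    Nat.le_add_left, true_and, true_imp_iff]
  tauto

/-- The number of lines of length at least `l` in the recurrence plot of size `n`. The bound
`n + 1 - l` on the starting points says that the line stays inside the plot. -/
noncomputable def longLineCount (x : ℕ → α) (n l : ℕ) : ℕ := countSq (lineStarts x l) (n + 1 - l)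

lemma longLineCount_antitone (x : ℕ → α) (n : ℕ) : Antitone (longLineCount x n) := fun k l hkl =>
  Set.ncard_le_ncard (Set.inter_subset_inter (lineStarts_antitone x hkl) fun p hp => by
    simp only [Set.mem_ofPred_eq] at hp ⊢; omega) (finite_inter_square _ _)

lemma setOf_isLine_eq (x : ℕ → α) (n : ℕ) (hl : 1 ≤ l) :
    {p : ℕ × ℕ | IsLine seqDist shift x n (1 / 2) p.1 p.2 l} =
      (lineStarts x l ∩ {p | p.1 < n + 1 - l ∧ p.2 < n + 1 - l}) \
        (lineStarts x (l + 1) ∩ {p | p.1 < n + 1 - (l + 1) ∧ p.2 < n + 1 - (l + 1)}) := by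
  ext ⟨i, j⟩
  have hmem : ∀ k, i < n + 1 - k ∧ j < n + 1 - k ↔ i + k ≤ n ∧ j + k ≤ n := fun k => by omega
  have hmax : max i j + l < n ↔ i + (l + 1) ≤ n ∧ j + (l + 1) ≤ n := by omega
  simp only [IsLine, RPone_half_iff, lineStarts, hmem, hmax, Nat.forall_lt_succ_right,
    Set.mem_sdiff, Set.mem_inter_iff, Set.mem_ofPred_eq]
  tauto

lemma Nlines_eq_longLineCount_sub (x : ℕ → α) (n : ℕ) (hl : 1 ≤ l) :
    (Nlines seqDist shift x n (1 / 2) l : ℝ) = longLineCount x n l - longLineCount x n (l + 1) := by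
  rw [Nlines, setOf_isLine_eq x n hl, eq_sub_iff_add_eq]
  refine mod_cast Set.ncard_sdiff_add_ncard_of_subset ?_ (finite_inter_square _ _)
  refine Set.inter_subset_inter (lineStarts_antitone x l.le_succ) fun p hp => ?_
  simp only [Set.mem_ofPred_eq] at hp ⊢
  omega

lemma Pline_eq_sub (x : ℕ → α) (n : ℕ) (hl : 1 ≤ l) :
    Pline seqDist shift x n (1 / 2) l =
      longLineCount x n l / ((n : ℝ) ^ 2 - n) - longLineCount x n (l + 1) / ((n : ℝ) ^ 2 - n) := by
  rw [Pline, Nlines_eq_longLineCount_sub x n hl, sub_div]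

lemma PlineGe_eq_longLineCount_div (x : ℕ → α) (n : ℕ) (hl : 1 ≤ l) :
    PlineGe seqDist shift x n (1 / 2) l = longLineCount x n l / ((n : ℝ) ^ 2 - n) := by
  have hzero : ∀ᶠ k in atTop, longLineCount x n k / ((n : ℝ) ^ 2 - n) = 0 := by
    filter_upwards [eventually_gt_atTop n] with k hk
    simp [longLineCount, countSq, Nat.sub_eq_zero_of_le hk]
  have hden : (0 : ℝ) ≤ (n : ℝ) ^ 2 - n :=
    sub_nonneg.2 (mod_cast Nat.le_self_pow two_ne_zero n)
  have hanti : Antitone fun k => (longLineCount x n k : ℝ) / ((n : ℝ) ^ 2 - n) := fun k k' hk =>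
    div_le_div_of_nonneg_right (mod_cast longLineCount_antitone x n hk) hden
  rw [← (hasSum_sub_succ hanti (tendsto_const_nhds.congr' (hzero.mono fun _ => Eq.symm)) l).tsum_eq]
  exact tsum_congr fun k => Pline_eq_sub x n (Nat.le_add_right_of_le hl)

lemma tendsto_sub_sq_div_sq_sub_self (k : ℕ) :
    Tendsto (fun n : ℕ => ((n - k : ℕ) : ℝ) ^ 2 / ((n : ℝ) ^ 2 - n)) atTop (𝓝 1) := by
  have hlim := ((tendsto_natCast_sub_div k).pow 2).div (tendsto_natCast_sub_div 1) one_ne_zero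
  rw [one_pow, div_one] at hlim
  refine hlim.congr' ?_
  filter_upwards [eventually_gt_atTop 0] with n hn
  have hn' : (n : ℝ) ≠ 0 := by exact_mod_cast hn.ne'
  rw [Pi.div_apply, Nat.cast_sub (Nat.one_le_of_lt hn), Nat.cast_one, div_pow, div_div]
  congr 1
  field_simp

lemma HasDens.tendsto_longLineCount_div {a : ℝ} (h : HasDens (leftSpecialPairs x l) a)
    (hl : 1 ≤ l) :
    Tendsto (fun n : ℕ => longLineCount x n l / ((n : ℝ) ^ 2 - n)) atTop (𝓝 a) := by
  obtain ⟨k, rfl⟩ := Nat.exists_eq_add_of_le' hl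
  have hstarts : HasDens (lineStarts x (k + 1)) a := by
    refine HasDens.of_shift ?_
    rwa [setOf_succ_mem_lineStarts]
  simp only [longLineCount, Nat.add_sub_add_right]
  exact hstarts.tendsto_countSq_comp_div (tendsto_sub_atTop_nat k)
    (tendsto_sub_sq_div_sq_sub_self k)

theorem HasDens.tendsto_PlineGe {a : ℝ} (h : HasDens (leftSpecialPairs x l) a) (hl : 1 ≤ l) :
    Tendsto (fun n => PlineGe seqDist shift x n (1 / 2) l) atTop (𝓝 a) := by
  simpa only [PlineGe_eq_longLineCount_div x _ hl] using h.tendsto_longLineCount_div hl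

theorem HasDens.tendsto_Pline {a b : ℝ} (h : HasDens (leftSpecialPairs x l) a)
    (h' : HasDens (leftSpecialPairs x (l + 1)) b) (hl : 1 ≤ l) :
    Tendsto (fun n => Pline seqDist shift x n (1 / 2) l) atTop (𝓝 (a - b)) := by
  simpa only [Pline_eq_sub x _ hl] using
    (h.tendsto_longLineCount_div hl).sub (h'.tendsto_longLineCount_div (Nat.le_add_left 1 l))

theorem HasDens.hasDens_Kset {x : ℕ → Bool} {a b : ℝ} (h : HasDens (leftSpecialPairs x l) a)
    (h' : HasDens (leftSpecialPairs x (l + 1)) b) (hl : 1 ≤ l) :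
    HasDens (Kset x l) (a - b) := by
  refine HasDens.of_shift ?_
  rw [setOf_succ_mem_Kset x hl]
  exact h.sdiff h' (leftSpecialPairs_antitone x l.le_succ)

-- The diagonal segments of length `l` starting at points of `leftSpecialPairs x l` are disjoint.
lemma countSq_leftSpecialPairs_mul_le (x : ℕ → α) (l n : ℕ) :
    countSq (leftSpecialPairs x l) n * l ≤ (n + l) ^ 2 := by
  classical
  have hdisj : ∀ {i j i' j' h h'}, (i, j) ∈ leftSpecialPairs x l →
      (i', j') ∈ leftSpecialPairs x l → h' < l → i + h = i' + h' → j + h = j' + h' → h' ≤ h := by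
    intro i j i' j' h h' hp hp' hh' hi hj
    by_contra! hlt
    have heq := hp'.2 (h' - h - 1) (by omega)
    rw [show i' + 1 + (h' - h - 1) = i by omega, show j' + 1 + (h' - h - 1) = j by omega] at heq
    exact hp.1 heq
  calc countSq (leftSpecialPairs x l) n * l
      = #({p ∈ range n ×ˢ range n | p ∈ leftSpecialPairs x l} ×ˢ range l) := by
        rw [card_product, card_range, countSq_eq_card]
    _ ≤ #(range (n + l) ×ˢ range (n + l)) := by
        refine card_le_card_of_injOn (fun t => (t.1.1 + t.2, t.1.2 + t.2)) ?_ ?_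
        · rintro ⟨⟨i, j⟩, h⟩ ht
          simp only [coe_product, coe_filter, Set.mem_prod, Set.mem_ofPred_eq, mem_product,
            mem_coe, mem_range] at ht ⊢
          omega
        · rintro ⟨⟨i, j⟩, h⟩ ht ⟨⟨i', j'⟩, h'⟩ ht' heq
          simp only [coe_product, coe_filter, Set.mem_prod, Set.mem_ofPred_eq, mem_coe,
            mem_range] at ht ht'
          simp only [Prod.mk.injEq] at heq ⊢
          have hle := hdisj ht.1.2 ht'.1.2 ht'.2 heq.1 heq.2
          have hge := hdisj ht'.1.2 ht.1.2 ht.2 heq.1.symm heq.2.symm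
          omega
    _ = (n + l) ^ 2 := by rw [card_product, card_range, sq]

lemma HasDens.leftSpecialPairs_mul_le_one {a : ℝ} (h : HasDens (leftSpecialPairs x l) a) :
    a * l ≤ 1 := by
  have hlim : Tendsto (fun n : ℕ => ((n + l : ℕ) : ℝ) ^ 2 / (n : ℝ) ^ 2) atTop (𝓝 1) := by
    simpa [div_pow] using ((tendsto_natCast_div_add_atTop (l : ℝ)).inv₀ one_ne_zero).pow 2
  refine le_of_tendsto_of_tendsto' (h.mul_const (l : ℝ)) hlim fun n => ?_
  rw [densCount_eq_countSq_div, div_mul_eq_mul_div]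
  gcongr
  exact_mod_cast countSq_leftSpecialPairs_mul_le x l n

lemma antitone_of_hasDens_leftSpecialPairs {E : ℕ → ℝ}
    (hE : ∀ l, HasDens (leftSpecialPairs x l) (E l)) : Antitone E := fun k l hkl =>
  (hE k).le_of_subset (hE l) (leftSpecialPairs_antitone x hkl)

lemma tendsto_zero_of_hasDens_leftSpecialPairs {E : ℕ → ℝ} (hE0 : ∀ l, 0 ≤ E l)
    (hE : ∀ l, HasDens (leftSpecialPairs x l) (E l)) : Tendsto E atTop (𝓝 0) := by
  refine squeeze_zero' (Eventually.of_forall hE0) ?_ tendsto_one_div_atTop_nhds_zero_nat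
  filter_upwards [eventually_gt_atTop 0] with l hl
  exact (le_div_iff₀ (mod_cast hl)).2 (hE l).leftSpecialPairs_mul_le_one

lemma leftSpecialPairs_eq_setOf_embedSeq (x : ℕ → α) (l : ℕ) :
    leftSpecialPairs x l = {p | embedSeq (l + 1) x p.1 0 ≠ embedSeq (l + 1) x p.2 0 ∧
      ∀ h : Fin l, embedSeq (l + 1) x p.1 h.succ = embedSeq (l + 1) x p.2 h.succ} := by
  ext p
  simp [leftSpecialPairs, embedSeq, Fin.forall_iff, add_assoc, add_comm 1]

theorem exists_hasDens_leftSpecialPairs [Finite α] {Q : ℕ} (hdet : BlockDetermined x Q)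
    (hrec : BlockRecurrent x Q) (hQ : 1 < Q) (hne : (leftSpecialPairs x l).Nonempty) :
    ∃ a > 0, HasDens (leftSpecialPairs x l) a := by
  classical
  have := Fintype.ofFinite α
  choose f hf using exists_hasMean_occ (m := l + 1) hdet hrec hQ
  have hf0 : ∀ w, 0 ≤ f w := fun w => (hf w).nonneg (occ_nonneg x w)
  have hfpos : ∀ i, 0 < f (embedSeq (l + 1) x i) := fun i => (hf _).pos_of_occ_embedSeq hdet hrec hQ
  have hdens := hasDens_setOf_rel hf fun u v => u 0 ≠ v 0 ∧ ∀ h : Fin l, u h.succ = v h.succ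
  rw [leftSpecialPairs_eq_setOf_embedSeq] at hne ⊢
  obtain ⟨p, hp⟩ := hne
  refine ⟨_, ?_, hdens⟩
  refine sum_pos' (fun u _ => mul_nonneg (hf0 _) (hf0 _))
    ⟨(embedSeq _ x p.1, embedSeq _ x p.2), ?_, ?_⟩
  · simpa using hp
  · exact mul_pos (hfpos _) (hfpos _)

end Lines

/-! ### Aperiodicity and left special words -/

section Aperiodic

lemma exists_periodic_of_succ_eq_imp {β : Type*} [Finite β] {c : ℕ → β}
    (hback : ∀ i j, c (i + 1) = c (j + 1) → c i = c j) : ∃ p > 0, Function.Periodic c p := by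
  have hiter : ∀ n i j, c (i + n) = c (j + n) → c i = c j := fun n => by
    induction n with
    | zero => exact fun i j h => h
    | succ n ih => exact fun i j h => ih i j (hback _ _ h)
  obtain ⟨b, hb⟩ := Finite.exists_infinite_fiber c
  have hfiber : (c ⁻¹' {b}).Infinite := Set.infinite_coe_iff.1 hb
  obtain ⟨u, hu⟩ := hfiber.nonempty
  obtain ⟨v, hv, huv⟩ := hfiber.exists_gt u
  refine ⟨v - u, Nat.sub_pos_of_lt huv, fun i => ?_⟩
  obtain ⟨w, hw, hiw⟩ := hfiber.exists_gt (i + v)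
  have hshift : c (w - (v - u)) = c u := hiter (v - u) _ _ <| by
    rw [Nat.sub_add_cancel (by omega), Nat.add_sub_of_le huv.le]
    exact hw.trans hv.symm
  refine hiter (w - (v - u) - i) _ _ ?_
  calc c (i + (v - u) + (w - (v - u) - i)) = c w := by congr 1; omega
    _ = c u := hw.trans hu.symm
    _ = c (w - (v - u)) := hshift.symm
    _ = c (i + (w - (v - u) - i)) := by congr 1; omega

lemma leftSpecialPairs_nonempty {α : Type*} [Finite α] {x y : ℕ → α}
    (hy : ∀ p > 0, ¬ Function.Periodic y p) (hyx : ∀ n, ∃ i, embedSeq n x i = embedSeq n y 0)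
    (l : ℕ) : (leftSpecialPairs x l).Nonempty := by
  by_contra! hempty
  have hletter : ∀ i j, embedSeq l y (i + 1) = embedSeq l y (j + 1) → y i = y j := fun i j hw => by
    obtain ⟨p, hp⟩ := hyx (i + j + l + 1)
    have hxy : ∀ t < i + j + l + 1, x (p + t) = y t := fun t ht => by
      simpa [embedSeq] using congrFun hp ⟨t, ht⟩
    by_contra hne
    refine (hempty ▸ Set.notMem_empty (p + i, p + j) : (p + i, p + j) ∉ leftSpecialPairs x l)
      ⟨?_, fun h hh => ?_⟩
    · simpa only [hxy i (by omega), hxy j (by omega)] using hne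
    · simp only [add_assoc]
      rw [hxy _ (by omega), hxy _ (by omega), ← add_assoc, ← add_assoc]
      exact congrFun hw ⟨h, hh⟩
  have hback : ∀ i j, embedSeq (l + 1) y (i + 1) = embedSeq (l + 1) y (j + 1) →
      embedSeq (l + 1) y i = embedSeq (l + 1) y j := fun i j hw => by
    have hshift : ∀ h < l + 1, y (i + 1 + h) = y (j + 1 + h) := fun h hh => congrFun hw ⟨h, hh⟩
    funext t
    refine Fin.cases ?_ (fun h => ?_) t
    · exact hletter i j (funext fun h => hshift h (by omega))
    · simpa [embedSeq, add_assoc, add_comm 1] using hshift h (by omega)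
  obtain ⟨p, hp, hper⟩ := exists_periodic_of_succ_eq_imp hback
  exact hy p hp fun i => by simpa [embedSeq] using congrFun (hper i) 0

end Aperiodic

/-! ### Fixed points of substitutions of constant length -/

section Substitution

variable {ζ : Bool → List Bool} {q : ℕ} {x : ℕ → Bool}

lemma substWord_eq_flatMap (ζ : Bool → List Bool) (w : List Bool) :
    substWord ζ w = w.flatMap ζ := by
  induction w with
  | nil => rfl
  | cons a w ih => rw [List.flatMap_cons, ← ih]; rfl

lemma ofFn_embedSeq_block (hlen : ∀ a, (ζ a).length = q) (hfix : substSeq ζ q x = x) (s : ℕ) :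
    List.ofFn (embedSeq q x (q * s)) = ζ (x s) := by
  refine List.ext_getElem (by simp [hlen]) fun r hr hr' => ?_
  have hrq : r < q := by simpa using hr
  rw [List.getElem_ofFn, embedSeq, ← congrFun hfix, substSeq, Nat.mul_add_div (by omega),
    Nat.div_eq_of_lt hrq, add_zero, Nat.mul_add_mod, Nat.mod_eq_of_lt hrq,
    List.getD_eq_getElem]

lemma substWord_ofFn_embedSeq (hlen : ∀ a, (ζ a).length = q) (hfix : substSeq ζ q x = x) (m s : ℕ) :
    substWord ζ (List.ofFn (embedSeq m x s)) = List.ofFn (embedSeq (q * m) x (q * s)) := by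
  rw [substWord_eq_flatMap, List.ofFn_mul', List.flatMap_def, List.map_ofFn]
  congr 2
  funext i
  rw [Function.comp_apply, embedSeq, ← ofFn_embedSeq_block hlen hfix]
  congr 1
  funext j
  simp only [embedSeq]
  congr 1
  ring

lemma iterate_substWord_singleton (hlen : ∀ a, (ζ a).length = q) (hfix : substSeq ζ q x = x)
    (k s : ℕ) : (substWord ζ)^[k] [x s] = List.ofFn (embedSeq (q ^ k) x (q ^ k * s)) := by
  induction k with
  | zero => simp [embedSeq]
  | succ k ih =>
    rw [Function.iterate_succ_apply', ih, substWord_ofFn_embedSeq hlen hfix, pow_succ', mul_assoc]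

lemma blockDetermined_of_substSeq_eq (hlen : ∀ a, (ζ a).length = q) (hfix : substSeq ζ q x = x) :
    BlockDetermined x q := fun s t hst r hr => by
  have hblocks : List.ofFn (embedSeq q x (q * s)) = List.ofFn (embedSeq q x (q * t)) := by
    rw [ofFn_embedSeq_block hlen hfix, ofFn_embedSeq_block hlen hfix, hst]
  exact congrFun (List.ofFn_injective hblocks) ⟨r, hr⟩

lemma exists_lt_pow_apply_eq (hlen : ∀ a, (ζ a).length = q) (hfix : substSeq ζ q x = x) {k : ℕ}
    (hk : ∀ a b, b ∈ (substWord ζ)^[k] [a]) (b : Bool) (s : ℕ) :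
    ∃ r < q ^ k, x (q ^ k * s + r) = b := by
  have hmem := hk (x s) b
  rw [iterate_substWord_singleton hlen hfix, List.mem_ofFn] at hmem
  obtain ⟨r, hr⟩ := hmem
  exact ⟨r, r.2, hr⟩

lemma exists_embedSeq_eq_of_infix {α : Type*} {x : ℕ → α} {m n i : ℕ} {w : Fin m → α}
    (h : List.ofFn w <:+: List.ofFn (embedSeq n x i)) : ∃ j, embedSeq m x j = w := by
  obtain ⟨k, -, hk⟩ := List.infix_iff_getElem?.1 h
  refine ⟨i + k, funext fun t => ?_⟩
  have ht := hk t (by simp)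
  rw [List.getElem?_ofFn] at ht
  grind [embedSeq]

lemma exists_embedSeq_eq_of_mem_substShift (hlen : ∀ a, (ζ a).length = q)
    (hfix : substSeq ζ q x = x) (hsurj : Function.Surjective x) {y : ℕ → Bool}
    (hy : y ∈ SubstShift ζ) (n : ℕ) : ∃ i, embedSeq n x i = embedSeq n y 0 := by
  obtain ⟨a, k, -, hinfix⟩ := hy n
  obtain ⟨s, rfl⟩ := hsurj a
  rw [iterate_substWord_singleton hlen hfix] at hinfix
  obtain ⟨i, hi⟩ := exists_embedSeq_eq_of_infix hinfix
  exact ⟨i, hi.trans (funext fun t => by rw [embedSeq, zero_add])⟩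

theorem exists_hasDens_leftSpecialPairs_of_substSeq_eq (hζ : IsConstLenSubst ζ q)
    (hprim : IsPrimitive ζ) (hap : IsAperiodic ζ) (hfix : substSeq ζ q x = x) (l : ℕ) :
    ∃ a > 0, HasDens (leftSpecialPairs x l) a := by
  obtain ⟨hq, hlen⟩ := hζ
  obtain ⟨k, hk, hletters⟩ := hprim
  obtain ⟨y, hyζ, hy⟩ := hap
  have hblock := exists_lt_pow_apply_eq hlen hfix hletters
  have hsurj : Function.Surjective x := fun b => (hblock b 0).imp' _ fun _ => And.right
  have hne : (leftSpecialPairs x l).Nonempty :=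
    leftSpecialPairs_nonempty (fun p hp hper => (hy p hp).elim fun i hi => hi (hper i))
      (exists_embedSeq_eq_of_mem_substShift hlen hfix hsurj hyζ) l
  exact exists_hasDens_leftSpecialPairs ((blockDetermined_of_substSeq_eq hlen hfix).pow k)
    (fun i => hblock (x i)) (Nat.one_lt_pow (by omega) hq) hne

end Substitution

end RQA

/-- P_ℓ(x,∞,ε₀) = dens(K_ℓ) and P≥_ℓ(x,∞,ε₀) = Σ_{l≥ℓ} dens(K_l) > 0;
moreover dens(K_ℓ) > 0 for infinitely many ℓ. -/
theorem Pline_eq_densK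
    (ζ : Bool → List Bool) (q : ℕ) (hζ : IsConstLenSubst ζ q)
    (hprim : IsPrimitive ζ) (hap : IsAperiodic ζ)
    (hζ0 : (ζ false).head? = some false)
    (x : ℕ → Bool) (hx0 : x 0 = false) (hxfix : substSeq ζ q x = x)
    (ℓ : ℕ) (hℓ : 1 ≤ ℓ) :
    ∃ dK : ℕ → ℝ,
      (∀ l : ℕ, 1 ≤ l → HasDens (Kset x l) (dK l)) ∧
      Tendsto (fun n : ℕ => Pline seqDist shift x n (1/2 : ℝ) ℓ) atTop (𝓝 (dK ℓ)) ∧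
      Summable (fun k : ℕ => dK (ℓ + k)) ∧
      0 < ∑' k : ℕ, dK (ℓ + k) ∧
      Tendsto (fun n : ℕ => PlineGe seqDist shift x n (1/2 : ℝ) ℓ) atTop
        (𝓝 (∑' k : ℕ, dK (ℓ + k))) ∧
      {l : ℕ | 1 ≤ l ∧ 0 < dK l}.Infinite := by
  choose E hpos hE using exists_hasDens_leftSpecialPairs_of_substSeq_eq hζ hprim hap hxfix
  have hE0 : Tendsto E atTop (𝓝 0) :=
    tendsto_zero_of_hasDens_leftSpecialPairs (fun l => (hpos l).le) hE
  have hsum : HasSum (fun k => E (ℓ + k) - E (ℓ + k + 1)) (E ℓ) :=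
    hasSum_sub_succ (antitone_of_hasDens_leftSpecialPairs hE) hE0 ℓ
  refine ⟨fun l => E l - E (l + 1), fun l => (hE l).hasDens_Kset (hE (l + 1)),
    (hE ℓ).tendsto_Pline (hE (ℓ + 1)) hℓ, hsum.summable, ?_, ?_, ?_⟩
  · rw [hsum.tsum_eq]
    exact hpos ℓ
  · rw [hsum.tsum_eq]
    exact (hE ℓ).tendsto_PlineGe hℓ
  · refine ((infinite_setOf_lt_of_tendsto_zero hpos hE0).sdiff (Set.finite_Iio 1)).mono ?_
    exact fun l hl => ⟨not_lt.1 hl.2, sub_pos.2 hl.1⟩
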